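/- (Solution of the Strang splitting error recursion, equation (4.5) of the paper.) Let a : ℕ → ℝ be a sequence with a(n) ≥ 0 for all n and a(0) = 0, and let B > 0, T > 0, and 0 < τ ≤ 1 be real numbers. Assume that for every n ∈ ℕ with n · τ ≤ T one has a(n) ≤ B τ · ∑_{k=0}^{n−1} a(k) + B τ² · ∑_{k=1}^{n−1} 1/k + B τ². Then there exists a constant C > 0 depending only on B and T (one may take C = B · (2 + max(0, log T)) · exp(B T)) such that for every n ∈ ℕ with n · τ ≤ T, a(n) ≤ C · τ² · (1 + |log τ|). -/

import Mathlib

/-- Discrete Grönwall inequality in summed form, on an initial segment `n ≤ N`. -/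
theorem le_mul_one_add_pow_of_le_mul_sum_add {a : ℕ → ℝ} {c D : ℝ} {N : ℕ} (hc : 0 ≤ c)
    (h : ∀ n ≤ N, a n ≤ c * (∑ k ∈ Finset.range n, a k) + D) :
    ∀ n ≤ N, a n ≤ D * (1 + c) ^ n := by
  intro n
  induction n using Nat.strong_induction_on with
  | _ n ih =>
    intro hn
    have hsum : ∑ k ∈ Finset.range n, a k ≤ ∑ k ∈ Finset.range n, D * (1 + c) ^ k :=
      Finset.sum_le_sum fun k hk =>
        have hkn := Finset.mem_range.mp hk
        ih k hkn (hkn.le.trans hn)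
    have hgeom := mul_geom_sum (1 + c) n
    calc a n ≤ c * (∑ k ∈ Finset.range n, a k) + D := h n hn
      _ ≤ c * (∑ k ∈ Finset.range n, D * (1 + c) ^ k) + D := by gcongr
      _ = D * (1 + c) ^ n := by
        rw [← Finset.mul_sum]
        linear_combination D * hgeom

theorem sum_Icc_one_div_le_one_add_log (n : ℕ) :
    ∑ k ∈ Finset.Icc 1 n, (1 : ℝ) / k ≤ 1 + Real.log n := by
  have h := harmonic_le_one_add_log n
  rw [harmonic_eq_sum_Icc] at h
  push_cast at h
  simpa only [one_div] using h

theorem log_natCast_le_max_add_abs_log {m : ℕ} {T τ : ℝ} (hτ : 0 < τ) (hm : (m : ℝ) * τ ≤ T) :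
    Real.log m ≤ max 0 (Real.log T) + |Real.log τ| := by
  rcases m.eq_zero_or_pos with rfl | hpos
  · simp only [Nat.cast_zero, Real.log_zero]
    positivity
  · have hm0 : (0 : ℝ) < m := by exact_mod_cast hpos
    have hlog := Real.log_le_log (mul_pos hm0 hτ) hm
    rw [Real.log_mul hm0.ne' hτ.ne'] at hlog
    linarith [le_max_right 0 (Real.log T), neg_abs_le (Real.log τ)]

/-- solution of the Strang splitting error recursion, eq. (4.5):
if `a 0 = 0`, `a n ≥ 0`, and `a n ≤ B τ ∑_{k<n} a k + B τ² ∑_{k=1}^{n−1} 1/k + B τ²`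
whenever `n τ ≤ T`, then there is `C > 0` depending only on `B` and `T`
(one may take `C = B (2 + max 0 (log T)) exp(B T)`) such that
`a n ≤ C τ² (1 + |log τ|)` whenever `n τ ≤ T`. -/
theorem strang_error_recursion
    (a : ℕ → ℝ) (B T τ : ℝ)
    (ha_nonneg : ∀ n : ℕ, 0 ≤ a n) (ha0 : a 0 = 0)
    (hB : 0 < B) (hT : 0 < T) (hτ0 : 0 < τ) (hτ1 : τ ≤ 1)
    (hrec : ∀ n : ℕ, (n : ℝ) * τ ≤ T →
      a n ≤ B * τ * (∑ k ∈ Finset.range n, a k)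
            + B * τ ^ 2 * (∑ k ∈ Finset.Icc 1 (n - 1), (1 : ℝ) / k)
            + B * τ ^ 2) :
    ∃ C : ℝ, 0 < C ∧ C = B * (2 + max 0 (Real.log T)) * Real.exp (B * T) ∧
      ∀ n : ℕ, (n : ℝ) * τ ≤ T → a n ≤ C * τ ^ 2 * (1 + |Real.log τ|) := by
  refine ⟨_, by positivity, rfl, fun N hN => ?_⟩
  set M := max 0 (Real.log T)
  set L := |Real.log τ|
  have hM : 0 ≤ M := le_max_left _ _
  have hL : 0 ≤ L := abs_nonneg _
  have hstep : ∀ n ≤ N, a n ≤ B * τ * (∑ k ∈ Finset.range n, a k)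
      + B * τ ^ 2 * ((2 + M) * (1 + L)) := by
    intro n hn
    have hnT : (n : ℝ) * τ ≤ T := le_trans (by gcongr) hN
    have hpred : ((n - 1 : ℕ) : ℝ) * τ ≤ T := le_trans (by gcongr; omega) hnT
    have hharm : ∑ k ∈ Finset.Icc 1 (n - 1), (1 : ℝ) / k ≤ 1 + (M + L) :=
      (sum_Icc_one_div_le_one_add_log _).trans
        (by gcongr; exact log_natCast_le_max_add_abs_log hτ0 hpred)
    have hbound : ∑ k ∈ Finset.Icc 1 (n - 1), (1 : ℝ) / k + 1 ≤ (2 + M) * (1 + L) := by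
      nlinarith [mul_nonneg hM hL]
    have hBτ : 0 ≤ B * τ ^ 2 := by positivity
    linarith [hrec n hnT, mul_le_mul_of_nonneg_left hbound hBτ]
  have hpow : (1 + B * τ) ^ N ≤ Real.exp (B * T) := by
    calc (1 + B * τ) ^ N ≤ Real.exp (B * τ) ^ N := by
          gcongr
          linarith [Real.add_one_le_exp (B * τ)]
      _ = Real.exp (B * (N * τ)) := by rw [← Real.exp_nat_mul]; ring_nf
      _ ≤ Real.exp (B * T) := by gcongr
  calc a N ≤ B * τ ^ 2 * ((2 + M) * (1 + L)) * (1 + B * τ) ^ N :=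
        le_mul_one_add_pow_of_le_mul_sum_add (by positivity) hstep N le_rfl
    _ ≤ B * τ ^ 2 * ((2 + M) * (1 + L)) * Real.exp (B * T) := by gcongr
    _ = B * (2 + M) * Real.exp (B * T) * τ ^ 2 * (1 + L) := by ring
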